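/- Let L n denote the number of lambda terms of size n. For every n ≥ 1, as rational numbers, L n = ∑_{k=0}^{⌊(n−1)/2⌋} (−1)^k · (1/(n−k)) · choose(n−k, k) · choose(2n−3k, n−2k−1). -/

import Mathlib

/-- Lambda terms with de Bruijn indices. -/
inductive Term : Type
  | var : ℕ → Term
  | app : Term → Term → Term
  | abs : Term → Term

namespace Term

/-- Natural size: every operator (zero, successor, application, abstraction) has size 1. -/
def size : Term → ℕ
  | var k => k + 1
  | app M N => M.size + N.size + 1
  | abs M => M.size + 1

end Term

/-- `L n` is the number of lambda terms of size `n`. -/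
noncomputable def L (n : ℕ) : ℕ := Nat.card {t : Term // t.size = n}


/-!
Splitting off the head symbol of a term gives `P = z (1 / (1 - z) + P + P²)` for the generating
function `P` of `L`, and clearing the denominator turns this into `P = z φ(P)` with
`φ(u) = (1 + u) (1 + u - z u)`. Lagrange inversion holds even though `φ` itself depends on `z`: it
gives `P = ∑ₘ zᵐ / m · [uᵐ⁻¹] φ(u)ᵐ`, and expanding `φ(u)ᵐ = (1 + u)ᵐ (1 + u - z u)ᵐ` in powers
of `z u` gives the formula.

For the inversion, the functional `Λ(G) = ∑ₘ zᵐ [uᵐ] G φᵐ` satisfies `Λ(u G) = z Λ(φ G)`, which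
forces it to vanish on multiples of `u - P`, and `Λ(1 - z φ') = 1`. Hence `P = Λ(u (1 - z φ'))`.
-/

open Finset hiding mk
open scoped PowerSeries Polynomial

section XAdicSum

open PowerSeries

variable {R : Type*} [CommRing R]

lemma eq_zero_of_forall_exists_eq_X_mul {ι : Sort*} {d : ι → R⟦X⟧}
    (h : ∀ i, ∃ j, d i = X * d j) (i : ι) : d i = 0 := by
  ext n
  induction n generalizing i with
  | zero =>
    obtain ⟨j, hj⟩ := h i
    simp [hj]
  | succ n ih =>
    obtain ⟨j, hj⟩ := h i
    rw [hj, coeff_succ_X_mul, ih, map_zero, map_zero]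

/-- The `X`-adically convergent sum `∑ j, X ^ j * f j`, encoded by its coefficients, each of which
is a finite sum. -/
noncomputable def xAdicSum (f : ℕ → R⟦X⟧) : R⟦X⟧ :=
  mk fun n => ∑ p ∈ antidiagonal n, coeff p.1 (f p.2)

lemma coeff_xAdicSum (f : ℕ → R⟦X⟧) (n : ℕ) :
    coeff n (xAdicSum f) = ∑ p ∈ antidiagonal n, coeff p.1 (f p.2) :=
  coeff_mk n _

lemma xAdicSum_eq_add_X_mul (f : ℕ → R⟦X⟧) :
    xAdicSum f = f 0 + X * xAdicSum fun j => f (j + 1) := by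
  ext n
  cases n with
  | zero => simp [coeff_xAdicSum]
  | succ n => simp [coeff_xAdicSum, coeff_succ_X_mul, Nat.sum_antidiagonal_succ']

lemma xAdicSum_add (f g : ℕ → R⟦X⟧) :
    (xAdicSum fun j => f j + g j) = xAdicSum f + xAdicSum g := by
  ext n
  simp [coeff_xAdicSum, sum_add_distrib]

lemma xAdicSum_mul_left (a : R⟦X⟧) (f : ℕ → R⟦X⟧) :
    (xAdicSum fun j => a * f j) = a * xAdicSum f := by
  refine sub_eq_zero.1 (eq_zero_of_forall_exists_eq_X_mul
    (d := fun f => (xAdicSum fun j => a * f j) - a * xAdicSum f)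
    (fun f => ⟨fun j => f (j + 1), ?_⟩) f)
  rw [xAdicSum_eq_add_X_mul fun j => a * f j, xAdicSum_eq_add_X_mul f]
  ring

end XAdicSum

section LagrangeInversion

variable {R : Type*} [CommRing R]

/-- The functional `G ↦ ∑ j, X ^ j * [uʲ] (G φʲ)` on polynomials in `u` over `R⟦X⟧`. If
`P = X * φ(P)`, its value at `G` is `G(P) / (1 - X * φ'(P))`. -/
noncomputable def lagrangeSum (φ : R⟦X⟧[X]) : R⟦X⟧[X] →ₗ[R⟦X⟧] R⟦X⟧ where
  toFun G := xAdicSum fun j => (G * φ ^ j).coeff j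
  map_add' G H := by simp_rw [add_mul, Polynomial.coeff_add, xAdicSum_add]
  map_smul' a G := by
    simp_rw [smul_mul_assoc, Polynomial.coeff_smul, smul_eq_mul, xAdicSum_mul_left,
      RingHom.id_apply]

lemma lagrangeSum_apply (φ G : R⟦X⟧[X]) :
    lagrangeSum φ G = xAdicSum fun j => (G * φ ^ j).coeff j :=
  rfl

lemma lagrangeSum_C_mul (φ G : R⟦X⟧[X]) (a : R⟦X⟧) :
    lagrangeSum φ (Polynomial.C a * G) = a * lagrangeSum φ G := by
  rw [← Polynomial.smul_eq_C_mul, map_smul, smul_eq_mul]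

lemma lagrangeSum_X_mul (φ G : R⟦X⟧[X]) :
    lagrangeSum φ (Polynomial.X * G) = PowerSeries.X * lagrangeSum φ (φ * G) := by
  have hcoeff (j : ℕ) :
      (Polynomial.X * G * φ ^ (j + 1)).coeff (j + 1) = (φ * G * φ ^ j).coeff j := by
    rw [mul_assoc, Polynomial.coeff_X_mul, pow_succ]
    ring_nf
  rw [lagrangeSum_apply, xAdicSum_eq_add_X_mul, lagrangeSum_apply]
  simp [hcoeff]

lemma lagrangeSum_X_sub_C_mul {φ : R⟦X⟧[X]} {P : R⟦X⟧} (hP : P = PowerSeries.X * φ.eval P)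
    (G : R⟦X⟧[X]) : lagrangeSum φ ((Polynomial.X - Polynomial.C P) * G) = 0 := by
  obtain ⟨K, hK⟩ := Polynomial.X_sub_C_dvd_sub_C_eval (a := P) (p := φ)
  refine eq_zero_of_forall_exists_eq_X_mul
    (d := fun G => lagrangeSum φ ((Polynomial.X - Polynomial.C P) * G))
    (fun G => ⟨K * G, ?_⟩) G
  calc lagrangeSum φ ((Polynomial.X - Polynomial.C P) * G)
      = PowerSeries.X * lagrangeSum φ (φ * G) - P * lagrangeSum φ G := by
        rw [sub_mul, map_sub, lagrangeSum_X_mul, lagrangeSum_C_mul]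
    _ = PowerSeries.X * (lagrangeSum φ (φ * G) - φ.eval P * lagrangeSum φ G) := by
        linear_combination -lagrangeSum φ G * hP
    _ = PowerSeries.X * lagrangeSum φ ((φ - Polynomial.C (φ.eval P)) * G) := by
        rw [sub_mul, map_sub, lagrangeSum_C_mul]
    _ = PowerSeries.X * lagrangeSum φ ((Polynomial.X - Polynomial.C P) * (K * G)) := by
        rw [hK, mul_assoc]

variable [Algebra ℚ R]

lemma coeff_X_mul_derivative_mul_pow (φ : R[X]) (m j : ℕ) :
    (Polynomial.X * (φ.derivative * φ ^ m)).coeff j =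
      ((j : ℚ) / (m + 1)) • (φ ^ (m + 1)).coeff j := by
  cases j with
  | zero => simp
  | succ j =>
    have hderiv : (m + 1 : ℚ) • (φ.derivative * φ ^ m).coeff j =
        (j + 1 : ℚ) • (φ ^ (m + 1)).coeff (j + 1) := by
      have h := congrArg (Polynomial.coeff · j) (Polynomial.derivative_pow_succ φ m)
      simp only [Polynomial.coeff_derivative, mul_assoc, Polynomial.coeff_C_mul] at h
      simpa [Algebra.smul_def, mul_comm] using h.symm
    have hm : (m + 1 : ℚ) ≠ 0 := m.cast_add_one_ne_zero
    rw [Polynomial.coeff_X_mul, ← inv_smul_smul₀ hm ((φ.derivative * φ ^ m).coeff j), hderiv,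
      smul_smul, Nat.cast_succ, div_eq_inv_mul]

lemma lagrangeSum_one_sub_C_X_mul_derivative (φ : R⟦X⟧[X]) :
    lagrangeSum φ (1 - Polynomial.C PowerSeries.X * φ.derivative) = 1 := by
  have hcoeff (j : ℕ) : (φ.derivative * φ ^ j).coeff j = (φ ^ (j + 1)).coeff (j + 1) := by
    rw [← Polynomial.coeff_X_mul, coeff_X_mul_derivative_mul_pow, Nat.cast_succ,
      div_self j.cast_add_one_ne_zero, one_smul]
  rw [map_sub, lagrangeSum_C_mul, lagrangeSum_apply, xAdicSum_eq_add_X_mul, lagrangeSum_apply]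
  simp [hcoeff]

lemma coeff_sub_X_mul_derivative_mul_pow (φ : R[X]) (j : ℕ) :
    ((φ - Polynomial.X * φ.derivative) * φ ^ j).coeff j =
      (1 / (j + 1) : ℚ) • (φ ^ (j + 1)).coeff j := by
  have hj : (j + 1 : ℚ) ≠ 0 := j.cast_add_one_ne_zero
  have hscalar : (1 / (j + 1) : ℚ) = 1 - j / (j + 1) := by
    field_simp
    ring
  rw [sub_mul, mul_assoc, Polynomial.coeff_sub, coeff_X_mul_derivative_mul_pow, ← pow_succ',
    hscalar, sub_smul, one_smul]

/-- Lagrange inversion, for a polynomial `φ` whose coefficients may themselves depend on `X`. -/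
theorem eq_X_mul_xAdicSum_of_eq_X_mul_eval {φ : R⟦X⟧[X]} {P : R⟦X⟧}
    (hP : P = PowerSeries.X * φ.eval P) :
    P = PowerSeries.X * xAdicSum fun j => (1 / (j + 1) : ℚ) • (φ ^ (j + 1)).coeff j := by
  set δ : R⟦X⟧[X] := 1 - Polynomial.C PowerSeries.X * φ.derivative with hδ
  calc P = lagrangeSum φ (Polynomial.C P * δ) := by
        rw [lagrangeSum_C_mul, lagrangeSum_one_sub_C_X_mul_derivative, mul_one]
    _ = lagrangeSum φ (Polynomial.X * δ) := by
        rw [eq_comm, ← sub_eq_zero, ← map_sub, ← sub_mul, lagrangeSum_X_sub_C_mul hP]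
    _ = PowerSeries.X * lagrangeSum φ (φ - Polynomial.X * φ.derivative) := by
        rw [hδ, mul_sub, mul_one, mul_left_comm, map_sub, lagrangeSum_C_mul, map_sub, mul_sub,
          ← mul_one Polynomial.X, lagrangeSum_X_mul, mul_one, mul_one]
    _ = _ := by
        simp_rw [lagrangeSum_apply, coeff_sub_X_mul_derivative_mul_pow]

end LagrangeInversion

namespace Term

lemma size_pos (t : Term) : 0 < t.size := by
  cases t <;> simp [size]

instance isEmpty_size_eq_zero : IsEmpty {t : Term // t.size = 0} :=
  ⟨fun t => t.1.size_pos.ne' t.2⟩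

/-- Splitting off the head symbol. Only `var n` contributes a variable of size `n + 1`, whence the
summand `Unit`. -/
def sizeSuccEquiv (n : ℕ) : {t : Term // t.size = n + 1} ≃
    Unit ⊕ {t : Term // t.size = n} ⊕
      (p : antidiagonal n) × {t : Term // t.size = p.1.1} × {t : Term // t.size = p.1.2} where
  toFun
    | ⟨var _, _⟩ => .inl ()
    | ⟨abs M, h⟩ => .inr (.inl ⟨M, by simpa [size] using h⟩)
    | ⟨app M N, h⟩ =>
      .inr (.inr ⟨⟨(M.size, N.size), by simpa [size] using h⟩, ⟨M, rfl⟩, ⟨N, rfl⟩⟩)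
  invFun
    | .inl _ => ⟨var n, rfl⟩
    | .inr (.inl M) => ⟨abs M.1, by simp [size, M.2]⟩
    | .inr (.inr ⟨p, M, N⟩) => ⟨app M.1 N.1, by
        simp [size, M.2, N.2, mem_antidiagonal.1 p.2]⟩
  left_inv := by
    rintro ⟨_ | _ | _, h⟩
    · obtain rfl : _ = n := Nat.succ_injective h
      rfl
    · rfl
    · rfl
  right_inv := by
    rintro (_ | M | ⟨⟨⟨a, b⟩, h⟩, ⟨M, rfl : M.size = a⟩, ⟨N, rfl : N.size = b⟩⟩) <;> rfl

instance finite_size_eq (n : ℕ) : Finite {t : Term // t.size = n} := by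
  induction n using Nat.strong_induction_on with
  | _ n ih =>
    cases n with
    | zero => infer_instance
    | succ n =>
      have := ih n n.lt_succ_self
      have (p : antidiagonal n) :
          Finite ({t : Term // t.size = p.1.1} × {t : Term // t.size = p.1.2}) := by
        have := ih p.1.1 (Nat.lt_succ_of_le (HasAntidiagonal.antidiagonal.fst_le p.2))
        have := ih p.1.2 (Nat.lt_succ_of_le (HasAntidiagonal.antidiagonal.snd_le p.2))
        infer_instance
      exact Finite.of_equiv _ (sizeSuccEquiv n).symm

end Term

lemma L_zero : L 0 = 0 :=
  Nat.card_of_isEmpty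

lemma L_succ (n : ℕ) : L (n + 1) = 1 + (L n + ∑ p ∈ antidiagonal n, L p.1 * L p.2) := by
  rw [L, Nat.card_congr (Term.sizeSuccEquiv n), Nat.card_sum, Nat.card_sum, Nat.card_sigma,
    ← sum_coe_sort (antidiagonal n)]
  simp [L, Nat.card_prod]

section GeneratingFunction

open PowerSeries

/-- The generating function of `L`, with coefficients cast to `R`. -/
noncomputable def termSeries (R : Type*) [CommRing R] : R⟦X⟧ := mk fun n => (L n : R)

/-- The polynomial `(1 + u) (1 + u - s u)` in `u`. At `s = X` it is the polynomial `φ` for which the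
generating function `P` of `L` satisfies `P = X * φ(P)`. -/
noncomputable def termKernel {A : Type*} [CommRing A] (s : A) : A[X] :=
  (1 + Polynomial.X) * (1 + Polynomial.X - Polynomial.C s * Polynomial.X)

variable (R : Type*) [CommRing R]

lemma termSeries_eq_X_mul :
    termSeries R = X * (mk 1 + (termSeries R + termSeries R ^ 2)) := by
  ext n
  cases n with
  | zero => simp [termSeries, L_zero]
  | succ n =>
    rw [coeff_succ_X_mul]
    simp [termSeries, sq, coeff_mul, L_succ]

lemma termSeries_eq_X_mul_eval_termKernel :
    termSeries R = X * (termKernel X).eval (termSeries R) := by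
  simp only [termKernel, Polynomial.eval_mul, Polynomial.eval_add, Polynomial.eval_sub,
    Polynomial.eval_one, Polynomial.eval_X, Polynomial.eval_C]
  linear_combination (1 - X) * termSeries_eq_X_mul R + X * mk_one_mul_one_sub_eq_one R

lemma termKernel_pow {A : Type*} [CommRing A] (s : A) (m : ℕ) :
    termKernel s ^ m = ∑ k ∈ range (m + 1), Polynomial.C ((-s) ^ k * m.choose k) *
      (Polynomial.X ^ k * (1 + Polynomial.X) ^ (2 * m - k)) := by
  rw [termKernel, mul_pow, sub_eq_neg_add, add_pow (-_), mul_sum]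
  refine sum_congr rfl fun k hk => ?_
  rw [show 2 * m - k = m + (m - k) by grind]
  simp only [← neg_mul, mul_pow, pow_add, map_mul, map_pow, map_neg, map_natCast]
  ring

lemma coeff_termKernel_pow {A : Type*} [CommRing A] (s : A) (m j : ℕ) :
    (termKernel s ^ m).coeff j = ∑ k ∈ range (m + 1), (-s) ^ k *
      ((if k ≤ j then m.choose k * (2 * m - k).choose (j - k) else 0 : ℕ) : A) := by
  rw [termKernel_pow, Polynomial.finsetSum_coeff]
  refine sum_congr rfl fun k _ => ?_
  rw [Polynomial.coeff_C_mul, Polynomial.coeff_X_pow_mul', Polynomial.coeff_one_add_X_pow]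
  split_ifs <;> simp [mul_assoc]

variable {R}

lemma coeff_neg_X_pow_mul_natCast (i k c : ℕ) :
    coeff i ((-X : R⟦X⟧) ^ k * (c : R⟦X⟧)) = if i = k then (-1 : R) ^ k * c else 0 := by
  have hmonomial : (-X : R⟦X⟧) ^ k * (c : R⟦X⟧) = C ((-1) ^ k * c : R) * X ^ k := by
    rw [neg_pow, map_mul, map_pow, map_neg, map_one, map_natCast, mul_right_comm]
  rw [hmonomial, coeff_C_mul, coeff_X_pow, mul_ite, mul_one, mul_zero]

lemma coeff_coeff_termKernel_pow (m i j : ℕ) :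
    coeff i ((termKernel (X : R⟦X⟧) ^ m).coeff j) =
      if i ≤ j then (-1 : R) ^ i * m.choose i * (2 * m - i).choose (j - i) else 0 := by
  simp only [coeff_termKernel_pow, map_sum, coeff_neg_X_pow_mul_natCast, sum_ite_eq, mem_range]
  split_ifs with him hij hij
  · push_cast
    ring
  · simp
  · simp [Nat.choose_eq_zero_of_lt (show m < i by lia)]
  · rfl

lemma L_succ_eq_sum_antidiagonal (n : ℕ) :
    (L (n + 1) : ℚ) = ∑ p ∈ antidiagonal n, (1 / (p.2 + 1) : ℚ) *
      coeff p.1 ((termKernel (X : ℚ⟦X⟧) ^ (p.2 + 1)).coeff p.2) := by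
  have hinv := congrArg (coeff (n + 1))
    (eq_X_mul_xAdicSum_of_eq_X_mul_eval (termSeries_eq_X_mul_eval_termKernel ℚ))
  simpa [termSeries, coeff_succ_X_mul, coeff_xAdicSum] using hinv

end GeneratingFunction

theorem L_closed_formula :
    ∀ n : ℕ, 1 ≤ n →
      (L n : ℚ) = ∑ k ∈ Finset.range ((n - 1) / 2 + 1),
        (-1 : ℚ) ^ k * (1 / ((n - k : ℕ) : ℚ)) * ((n - k).choose k : ℚ)
          * ((2 * n - 3 * k).choose (n - 2 * k - 1) : ℚ) := by
  intro n hn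
  obtain ⟨n, rfl⟩ := Nat.exists_eq_add_of_le' hn
  rw [L_succ_eq_sum_antidiagonal, Nat.sum_antidiagonal_eq_sum_range_succ_mk, eq_comm]
  refine sum_subset_zero_on_sdiff (range_subset_range.2 (by lia)) (fun k hk => ?_) fun k hk => ?_
  · have hlt : n - k < k := by grind
    rw [coeff_coeff_termKernel_pow, if_neg hlt.not_ge, mul_zero]
  · have hle : k ≤ n - k := by grind
    rw [coeff_coeff_termKernel_pow, if_pos hle,
      show n + 1 - k = n - k + 1 by lia, show 2 * (n + 1) - 3 * k = 2 * (n - k + 1) - k by lia,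
      show n + 1 - 2 * k - 1 = n - k - k by lia, Nat.cast_succ]
    ring
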